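/- (Greedy-optimal policies are optimal in deterministic episodic MDPs.) Let a deterministic MDP be given and assume it is episodic. Then for every greedy-optimal policy π (i.e., π(s) ∈ A*(s) for all s ∈ S) and every pair (s,a) ∈ S × A, the hitting time T(s,a,π) is finite and the return satisfies G(s,a,π) = Q*(s,a); in particular, if a ∈ A*(s) then G(s,a,π) = V*(s). -/

import Mathlib

/-- A deterministic MDP: finite states `S` with terminal state `t`, actions `A`,
deterministic transition function `g`, reward function `r`, and discount `γ ∈ (0,1]`.
The terminal state is absorbing with zero reward. -/
structure DetMDP (S A : Type) where
  t : S
  g : S → A → S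
  r : S → A → ℝ
  γ : ℝ
  γ_pos : 0 < γ
  γ_le_one : γ ≤ 1
  g_t : ∀ a, g t a = t
  r_t : ∀ a, r t a = 0

namespace DetMDP

variable {S A : Type}

/-- The trajectory of (state, action) pairs starting from `(s, a)` and thereafter
following policy `π`: `s_0 = s`, `a_0 = a`, `s_{u+1} = g s_u a_u`, `a_{u+1} = π s_{u+1}`. -/
def traj (M : DetMDP S A) (π : S → A) (s : S) (a : A) : ℕ → S × A
  | 0 => (s, a)
  | u + 1 =>
    let p := traj M π s a u
    let s' := M.g p.1 p.2
    (s', π s')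

/-- The trajectory from `(s,a)` under `π` eventually hits the terminal state. -/
def Terminates (M : DetMDP S A) (π : S → A) (s : S) (a : A) : Prop :=
  ∃ u, (M.traj π s a u).1 = M.t

/-- The hitting time `T(s,a,π)`: the least `u` with `s_u = t`
(junk value `0` when the trajectory never terminates). -/
noncomputable def hit (M : DetMDP S A) (π : S → A) (s : S) (a : A) : ℕ :=
  sInf {u | (M.traj π s a u).1 = M.t}

/-- The episodic return `G(s,a,π) = Σ_{u=0}^{T-1} γ^u r(s_u, a_u)`. -/
noncomputable def ret (M : DetMDP S A) (π : S → A) (s : S) (a : A) : ℝ :=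
  ∑ u ∈ Finset.range (M.hit π s a),
    M.γ ^ u * M.r (M.traj π s a u).1 (M.traj π s a u).2

/-- The optimal action-value function `Q*(s,a)`: the maximum of `G(s,a,π)` over the
(finitely many) policies `π` that terminate from `(s,a)`. -/
noncomputable def Qstar (M : DetMDP S A) (s : S) (a : A) : ℝ :=
  sSup {x | ∃ π : S → A, M.Terminates π s a ∧ M.ret π s a = x}

/-- The optimal value function `V*(s) = max_a Q*(s,a)`. -/
noncomputable def Vstar (M : DetMDP S A) (s : S) : ℝ :=
  sSup {x | ∃ a : A, M.Qstar s a = x}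

/-- The set of optimal actions `A*(s)`. -/
def Astar (M : DetMDP S A) (s : S) : Set A :=
  {a | M.Qstar s a = M.Vstar s}

/-- A policy is greedy-optimal if it selects an optimal action in every state. -/
def GreedyOpt (M : DetMDP S A) (π : S → A) : Prop :=
  ∀ s, π s ∈ M.Astar s

/-- The MDP is episodic: every greedy-optimal policy terminates from every start pair. -/
def Episodic (M : DetMDP S A) : Prop :=
  ∀ π : S → A, M.GreedyOpt π → ∀ s a, M.Terminates π s a

end DetMDP

/-! A greedy-optimal policy `π` is optimal from every pair from which it terminates. Induct along
its trajectory, backwards from `t`: the Bellman inequality bounds `Q*(s,a)` by `r(s,a) + γ V*(s')`,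
where `s' = g(s,a)`; greediness turns `V*(s')` into `Q*(s', π s')`, which is the return of `π` from
`(s', π s')` by the inductive hypothesis. The termination guaranteed by episodicity is what makes
this backward induction well-founded. -/

namespace DetMDP

variable {S A : Type} {M : DetMDP S A} {π : S → A} {s : S} {a : A}

lemma traj_zero (M : DetMDP S A) (π : S → A) (s : S) (a : A) : M.traj π s a 0 = (s, a) :=
  rfl

lemma traj_succ_eq_traj_next (M : DetMDP S A) (π : S → A) (s : S) (a : A) (u : ℕ) :
    M.traj π s a (u + 1) = M.traj π (M.g s a) (π (M.g s a)) u := by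
  induction u with
  | zero => rfl
  | succ u ih => rw [traj, ih, traj]

lemma terminates_t (M : DetMDP S A) (π : S → A) (a : A) : M.Terminates π M.t a :=
  ⟨0, rfl⟩

lemma hit_t (M : DetMDP S A) (π : S → A) (a : A) : M.hit π M.t a = 0 :=
  Nat.sInf_eq_zero.mpr (.inl rfl)

lemma Terminates.next (h : M.Terminates π s a) : M.Terminates π (M.g s a) (π (M.g s a)) := by
  obtain ⟨_ | u, hu⟩ := h
  · obtain rfl : s = M.t := hu
    simpa only [M.g_t] using M.terminates_t π (π M.t)
  · exact ⟨u, by rwa [← traj_succ_eq_traj_next]⟩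

lemma Terminates.induction {P : S → A → Prop} (h : M.Terminates π s a)
    (terminal : ∀ a, P M.t a)
    (step : ∀ s a, M.Terminates π s a → P (M.g s a) (π (M.g s a)) → P s a) : P s a := by
  obtain ⟨u, hu⟩ := h
  induction u generalizing s a with
  | zero =>
    obtain rfl : s = M.t := hu
    exact terminal a
  | succ u ih =>
    refine step s a ⟨u + 1, hu⟩ (ih ?_)
    rwa [← traj_succ_eq_traj_next]

lemma Terminates.hit_eq_hit_next_add_one (h : M.Terminates π s a) (hs : s ≠ M.t) :
    M.hit π s a = M.hit π (M.g s a) (π (M.g s a)) + 1 := by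
  have hpos : 0 < M.hit π s a :=
    Nat.pos_of_ne_zero fun h0 =>
      (Nat.sInf_eq_zero.mp h0).elim hs fun hempty => Set.Nonempty.ne_empty h hempty
  simpa only [hit, traj_succ_eq_traj_next] using (Nat.sInf_add hpos).symm

lemma ret_t (M : DetMDP S A) (π : S → A) (a : A) : M.ret π M.t a = 0 := by
  rw [ret, hit_t, Finset.sum_range_zero]

lemma Terminates.ret_eq_r_add_ret_next (h : M.Terminates π s a) :
    M.ret π s a = M.r s a + M.γ * M.ret π (M.g s a) (π (M.g s a)) := by
  by_cases hs : s = M.t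
  · subst hs
    simp only [M.g_t, M.r_t, ret_t, mul_zero, add_zero]
  · rw [ret, h.hit_eq_hit_next_add_one hs, Finset.sum_range_succ', add_comm]
    simp only [ret, traj_zero, traj_succ_eq_traj_next, pow_zero, one_mul, pow_succ', mul_assoc,
      ← Finset.mul_sum]

lemma Qstar_t (M : DetMDP S A) (a : A) : M.Qstar M.t a = 0 := by
  have : Nonempty (S → A) := ⟨fun _ => a⟩
  simp only [Qstar, terminates_t, ret_t, true_and, exists_const, Set.ofPred_eq_eq_singleton',
    csSup_singleton]

lemma Qstar_le_Vstar [Finite A] (M : DetMDP S A) (s : S) (a : A) :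
    M.Qstar s a ≤ M.Vstar s :=
  le_csSup (Set.finite_range (M.Qstar s)).bddAbove ⟨a, rfl⟩

variable [Finite S] [Finite A]

lemma Terminates.ret_le_Qstar (h : M.Terminates π s a) : M.ret π s a ≤ M.Qstar s a := by
  refine le_csSup ?_ ⟨π, h, rfl⟩
  refine ((Set.finite_range fun ρ => M.ret ρ s a).subset ?_).bddAbove
  rintro _ ⟨ρ, -, rfl⟩
  exact ⟨ρ, rfl⟩

lemma Terminates.Qstar_le_r_add_Vstar_next (h : M.Terminates π s a) :
    M.Qstar s a ≤ M.r s a + M.γ * M.Vstar (M.g s a) := by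
  refine csSup_le ⟨_, π, h, rfl⟩ ?_
  rintro _ ⟨ρ, hρ, rfl⟩
  have hnext : M.ret ρ (M.g s a) (ρ (M.g s a)) ≤ M.Vstar (M.g s a) :=
    hρ.next.ret_le_Qstar.trans (M.Qstar_le_Vstar _ _)
  rw [hρ.ret_eq_r_add_ret_next]
  gcongr
  exact M.γ_pos.le

end DetMDP

theorem greedyOpt_policies_are_optimal_general
    {S A : Type} [Finite S] [Finite A] {M : DetMDP S A} {π : S → A} {s : S} {a : A}
    (hπ : M.GreedyOpt π) (h : M.Terminates π s a) :
    M.ret π s a = M.Qstar s a ∧ (a ∈ M.Astar s → M.ret π s a = M.Vstar s) := by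
  have hQ : M.ret π s a = M.Qstar s a := by
    refine h.induction (P := fun s a => M.ret π s a = M.Qstar s a) (fun a => ?_)
      fun s a hsa ih => hsa.ret_le_Qstar.antisymm ?_
    · rw [M.ret_t, M.Qstar_t]
    · calc
        M.Qstar s a ≤ M.r s a + M.γ * M.Vstar (M.g s a) := hsa.Qstar_le_r_add_Vstar_next
        _ = M.r s a + M.γ * M.Qstar (M.g s a) (π (M.g s a)) := by rw [hπ (M.g s a)]
        _ = M.r s a + M.γ * M.ret π (M.g s a) (π (M.g s a)) := by rw [ih]
        _ = M.ret π s a := hsa.ret_eq_r_add_ret_next.symm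
  exact ⟨hQ, hQ.trans⟩

/-- In a deterministic episodic MDP, every greedy-optimal policy is
optimal: for every start pair `(s,a)` it terminates and its return equals `Q*(s,a)`;
in particular it attains `V*(s)` when `a ∈ A*(s)`. -/
theorem greedyOpt_policies_are_optimal
    {S A : Type} [Fintype S] [Fintype A] [Nonempty A]
    (M : DetMDP S A)
    (hterm : ∀ (s : S) (a : A), ∃ π : S → A, M.Terminates π s a)
    (heps : M.Episodic) :
    ∀ π : S → A, M.GreedyOpt π → ∀ (s : S) (a : A),
      M.Terminates π s a ∧ M.ret π s a = M.Qstar s a ∧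
        (a ∈ M.Astar s → M.ret π s a = M.Vstar s) := by
  intro π hπ s a
  exact ⟨heps π hπ s a, greedyOpt_policies_are_optimal_general hπ (heps π hπ s a)⟩
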